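/- Let Ω = ⋃_{j=1}^n (a_j, b_j) ⊆ ℝ be a finite union of pairwise disjoint bounded open intervals. For any λ ≠ μ in ℝ, the exponentials e_λ and e_μ are orthogonal in L²(Ω) if and only if A(φ(λ), φ(μ)) = 0, where A is the bilinear form A(z, w) = ⟨z₁, w₁⟩ − ⟨z₂, w₂⟩ on ℂ^{2n}. -/

import Mathlib

open MeasureTheory Set

/-- The exponential function `e_λ(x) = exp(2πiλx)`. -/
noncomputable def expF (lam : ℝ) : ℝ → ℂ :=
  fun x => Complex.exp (2 * (Real.pi : ℂ) * Complex.I * (lam : ℂ) * (x : ℂ))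

/-- The map `φ : ℝ → ℂ^{2n}`,
`φ(x) = (e^{-2πi a_1 x}, …, e^{-2πi a_n x}, e^{-2πi b_1 x}, …, e^{-2πi b_n x})`. -/
noncomputable def phiMap (n : ℕ) (a b : Fin n → ℝ) (x : ℝ) : (Fin n → ℂ) × (Fin n → ℂ) :=
  (fun j => Complex.exp (-(2 * (Real.pi : ℂ) * Complex.I * (a j : ℂ) * (x : ℂ))),
   fun j => Complex.exp (-(2 * (Real.pi : ℂ) * Complex.I * (b j : ℂ) * (x : ℂ))))

/-- The bilinear form `A(z, w) = ⟨z₁, w₁⟩ - ⟨z₂, w₂⟩` on `ℂ^{2n} = ℂⁿ × ℂⁿ`. -/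
noncomputable def formA (n : ℕ) (z w : (Fin n → ℂ) × (Fin n → ℂ)) : ℂ :=
  (∑ j, z.1 j * (starRingEnd ℂ) (w.1 j)) - (∑ j, z.2 j * (starRingEnd ℂ) (w.2 j))

/-!
The derivative of `e_ν` is `2πiν e_ν`, so `2πiν` times the integral of `e_ν` over `Ω` is the total
increment of `e_ν` over the intervals of `Ω`. For `ν = λ - μ`, the product `e_λ * conj e_μ` is `e_ν`
and the total increment is `-A(φ(μ), φ(λ))`; since `A` is Hermitian this vanishes exactly when
`A(φ(λ), φ(μ))` does, and the factor `2πiν` is nonzero.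
-/

open scoped ComplexConjugate

theorem setIntegral_iUnion_Ioo {ι E : Type*} [Fintype ι] [NormedAddCommGroup E] [NormedSpace ℝ E]
    {μ : Measure ℝ} [NullSingletonClass μ] {f : ℝ → E} {a b : ι → ℝ} (hab : ∀ j, a j ≤ b j)
    (hdisj : Pairwise fun i j => Disjoint (Ioo (a i) (b i)) (Ioo (a j) (b j)))
    (hf : ∀ j, IntervalIntegrable f μ (a j) (b j)) :
    ∫ x in ⋃ j, Ioo (a j) (b j), f x ∂μ = ∑ j, ∫ x in a j..b j, f x ∂μ := by
  rw [integral_iUnion_fintype (fun _ => measurableSet_Ioo) hdisj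
    fun j => (hf j).1.mono_set Ioo_subset_Ioc_self]
  simp only [← integral_Ioc_eq_integral_Ioo, intervalIntegral.integral_of_le (hab _)]

theorem expF_mul_conj_expF (lam mu x : ℝ) :
    expF lam x * conj (expF mu x) = expF (lam - mu) x := by
  simp only [expF, ← Complex.exp_conj, ← Complex.exp_add, map_mul, Complex.conj_I,
    Complex.conj_ofReal, map_ofNat, Complex.ofReal_sub]
  ring_nf

theorem hasDerivAt_expF (lam x : ℝ) :
    HasDerivAt (expF lam) (2 * Real.pi * Complex.I * lam * expF lam x) x := by
  have hlin := (Complex.ofRealCLM.hasDerivAt (x := x)).const_mul (2 * Real.pi * Complex.I * lam)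
  unfold expF
  simpa [mul_comm] using hlin.cexp

theorem continuous_expF (lam : ℝ) : Continuous (expF lam) :=
  continuous_iff_continuousAt.2 fun x => (hasDerivAt_expF lam x).continuousAt

theorem two_pi_I_mul_integral_expF (lam a b : ℝ) :
    2 * Real.pi * Complex.I * lam * ∫ x in a..b, expF lam x = expF lam b - expF lam a := by
  rw [← intervalIntegral.integral_const_mul]
  exact intervalIntegral.integral_eq_sub_of_hasDerivAt (fun x _ => hasDerivAt_expF lam x)
    (((continuous_expF lam).const_mul _).intervalIntegrable a b)

theorem conj_formA (n : ℕ) (z w : (Fin n → ℂ) × (Fin n → ℂ)) :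
    conj (formA n z w) = formA n w z := by
  simp only [formA, map_sub, map_sum, map_mul, Complex.conj_conj, mul_comm]

theorem phiMap_eq_expF_neg (n : ℕ) (a b : Fin n → ℝ) (x : ℝ) :
    phiMap n a b x = (fun j => expF (-x) (a j), fun j => expF (-x) (b j)) := by
  simp only [phiMap, expF, Complex.ofReal_neg, mul_neg, neg_mul, mul_right_comm]

theorem formA_phiMap (n : ℕ) (a b : Fin n → ℝ) (lam mu : ℝ) :
    formA n (phiMap n a b lam) (phiMap n a b mu) =
      ∑ j, (expF (mu - lam) (a j) - expF (mu - lam) (b j)) := by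
  simp only [formA, phiMap_eq_expF_neg, expF_mul_conj_expF, neg_sub_neg, Finset.sum_sub_distrib]

theorem conj_formA_phiMap_eq_mul_integral {n : ℕ} {a b : Fin n → ℝ} (hab : ∀ j, a j ≤ b j)
    (hdisj : Pairwise fun i j => Disjoint (Ioo (a i) (b i)) (Ioo (a j) (b j))) (lam mu : ℝ) :
    conj (formA n (phiMap n a b lam) (phiMap n a b mu)) =
      -(2 * Real.pi * Complex.I * (lam - mu : ℝ)) *
        ∫ x in ⋃ j, Ioo (a j) (b j), expF lam x * conj (expF mu x) := by
  simp only [expF_mul_conj_expF]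
  rw [conj_formA, formA_phiMap, setIntegral_iUnion_Ioo hab hdisj
    fun j => (continuous_expF _).intervalIntegrable _ _]
  simp only [Finset.mul_sum, neg_mul, two_pi_I_mul_integral_expF, neg_sub]

/-- For `λ ≠ μ`, the exponentials `e_λ` and `e_μ` are orthogonal in `L²(Ω)` if and
only if `A(φ(λ), φ(μ)) = 0`. -/
theorem exp_orthogonal_iff_formA (n : ℕ) (a b : Fin n → ℝ) (Ω : Set ℝ)
    (hΩ : Ω = ⋃ j, Ioo (a j) (b j))
    (hab : ∀ j, a j ≤ b j)
    (hdisj : Pairwise fun i j => Disjoint (Ioo (a i) (b i)) (Ioo (a j) (b j)))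
    (lam mu : ℝ) (hne : lam ≠ mu) :
    (∫ x in Ω, expF lam x * (starRingEnd ℂ) (expF mu x)) = 0 ↔
      formA n (phiMap n a b lam) (phiMap n a b mu) = 0 := by
  have hfactor : -(2 * Real.pi * Complex.I * (lam - mu : ℝ)) ≠ 0 :=
    neg_ne_zero.2 <| mul_ne_zero Complex.two_pi_I_ne_zero <|
      Complex.ofReal_ne_zero.2 <| sub_ne_zero.2 hne
  rw [← map_eq_zero conj (a := formA n _ _), conj_formA_phiMap_eq_mul_integral hab hdisj, ← hΩ,
    mul_eq_zero_iff_left hfactor]
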